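/- Let w ≥ 1 and let λ be a partition of w with at most n parts. For j ≥ 0 let λ^j = p^j·λ be the partition obtained by multiplying every part of λ by p^j. Then the unique polynomial ψ_{λ^j} ∈ ℤ[X_1,…,X_n] with m_{λ^j} = ψ_{λ^j}(e_1,…,e_n) lies in the subring R_j. -/

import Mathlib

/-!
A ring endomorphism `φ` of `A` with `φ a ≡ a ^ p` modulo `p` satisfies Dwork's congruence
`φ (w_k(c)) ≡ w_{k+1}(c)` modulo `p ^ (k + 1)`, where `w_k(c) = ∑_{m ≤ k} p ^ m c_m ^ (p ^ (k - m))`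
is the `k`-th Witt polynomial. Read from left to right, it shows inductively that every `φ^k a` is
of the form `w_k(c)`. Read from right to left, it shows inductively that every `w_k(c)` lies in
`∑_{i ≤ k} p ^ (k - i) φ^i(A)`. The two readings may be used with different endomorphisms.

The substitution `x_i ↦ x_i ^ p` is such an endomorphism both of `ℤ[x_1,…,x_n]` and of its subring
`Λ` of symmetric polynomials, and `m_{λ^j}` is its `j`-th iterate at `m_λ`. By the first reading in
`Λ`, `m_{λ^j} = w_j(c)` with all `c_m` in `Λ`. The isomorphism of `Λ` with `ℤ[X_1,…,X_n]` commutes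
with Witt polynomials, though not with the substitutions, so it sends `m_{λ^j}` to some `w_j(c')`.
By the second reading in `ℤ[X_1,…,X_n]`, where the sum is `R_j`, this lies in `R_j`.
-/

open scoped Classical

/-- The subring `R_k = ℤ[X₁^{p^k},…,Xₙ^{p^k}] + p·ℤ[X₁^{p^{k-1}},…,Xₙ^{p^{k-1}}] + ⋯ +
p^k·ℤ[X₁,…,Xₙ]` of `ℤ[X₁,…,Xₙ]`, viewed as a set. -/
def Rset (p n k : ℕ) : Set (MvPolynomial (Fin n) ℤ) :=
  { F | ∃ g : ℕ → MvPolynomial (Fin n) ℤ,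
      F = ∑ i ∈ Finset.range (k + 1),
        (p : MvPolynomial (Fin n) ℤ) ^ (k - i) *
          MvPolynomial.aeval (fun j => MvPolynomial.X j ^ p ^ i) (g i) }

/-- The monomial symmetric polynomial in `n` variables associated to the partition
(multiset of positive integers) `μ`: the sum of all distinct monomials whose multiset of
nonzero exponents equals `μ`. -/
noncomputable def msymmM (n : ℕ) (R : Type) [CommSemiring R] (μ : Multiset ℕ) :
    MvPolynomial (Fin n) R :=
  ∑ d : Fin n → Fin (μ.sum + 1),
    if (Multiset.map (fun i => (d i : ℕ)) Finset.univ.val).filter (· ≠ 0) = μ then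
      MvPolynomial.monomial (Finsupp.equivFunOnFinite.symm fun i => (d i : ℕ)) (1 : R)
    else 0

open Finset MvPolynomial

section FrobeniusLift

variable (R : Type*) {A : Type*} [CommRing R] [CommRing A] [Algebra R A] {p : ℕ} {φ : A →+* A}

theorem aeval_update_add_wittPolynomial (c : ℕ → A) (k : ℕ) (d : A) :
    aeval (Function.update c k (c k + d)) (wittPolynomial p R k) =
      aeval c (wittPolynomial p R k) + p ^ k * d := by
  have hlower : ∀ m ∈ range k, (p : A) ^ m * Function.update c k (c k + d) m ^ p ^ (k - m) =
      p ^ m * c m ^ p ^ (k - m) := fun m hm => by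
    rw [Function.update_of_ne (mem_range.1 hm).ne]
  rw [aeval_wittPolynomial, aeval_wittPolynomial, sum_range_succ, sum_range_succ,
    sum_congr rfl hlower]
  simp only [Function.update_self, Nat.sub_self, pow_zero, pow_one]
  ring

/-- A Frobenius lift at `p`: a ring endomorphism that reduces to `a ↦ a ^ p` modulo `p`. -/
def IsFrobeniusLift (p : ℕ) (φ : A →+* A) : Prop :=
  ∀ a, (p : A) ∣ φ a - a ^ p

namespace IsFrobeniusLift

theorem restrict {S : Type*} [SetLike S A] [SubringClass S A] {s : S} (hφ : IsFrobeniusLift p φ)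
    (hmap : ∀ a ∈ s, φ a ∈ s) (hdiv : ∀ a, (p : A) * a ∈ s → a ∈ s) :
    IsFrobeniusLift p (φ.restrict s s hmap) := by
  intro a
  obtain ⟨b, hb⟩ := hφ a
  have hb_mem : b ∈ s := hdiv b (hb ▸ sub_mem (hmap a a.2) (pow_mem a.2 p))
  exact ⟨⟨b, hb_mem⟩, Subtype.ext (by simpa using hb)⟩

theorem pow_dvd_map_aeval_wittPolynomial_sub (hφ : IsFrobeniusLift p φ) (c : ℕ → A) (k : ℕ) :
    (p : A) ^ (k + 1) ∣
      φ (aeval c (wittPolynomial p R k)) - aeval c (wittPolynomial p R (k + 1)) := by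
  have hterm (m : ℕ) (hm : m ∈ range (k + 1)) :
      (p : A) ^ (k + 1) ∣ p ^ m * φ (c m) ^ p ^ (k - m) - p ^ m * c m ^ p ^ (k + 1 - m) := by
    have hmk : m ≤ k := mem_range_succ_iff.1 hm
    have hdvd := mul_dvd_mul_left ((p : A) ^ m) (dvd_sub_pow_of_dvd_sub (hφ (c m)) (k - m))
    rwa [← pow_mul, ← pow_succ', ← pow_add, mul_sub, ← Nat.sub_add_comm hmk,
      Nat.add_sub_of_le (Nat.le_succ_of_le hmk)] at hdvd
  simp only [aeval_wittPolynomial, map_sum, map_mul, map_pow, map_natCast]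
  rw [sum_range_succ _ (k + 1), ← sub_sub, ← sum_sub_distrib]
  exact dvd_sub (dvd_sum hterm) (dvd_mul_right _ _)

theorem exists_aeval_wittPolynomial_eq_iterate (hφ : IsFrobeniusLift p φ) (a : A) (k : ℕ) :
    ∃ c : ℕ → A, aeval c (wittPolynomial p R k) = φ^[k] a := by
  induction k with
  | zero => exact ⟨fun _ => a, by simp⟩
  | succ k ih =>
    obtain ⟨c, hc⟩ := ih
    obtain ⟨d, hd⟩ := hφ.pow_dvd_map_aeval_wittPolynomial_sub R c k
    refine ⟨Function.update c (k + 1) (c (k + 1) + d), ?_⟩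
    rw [aeval_update_add_wittPolynomial, ← hd, add_sub_cancel, hc, Function.iterate_succ_apply']

theorem exists_aeval_wittPolynomial_eq_sum (hφ : IsFrobeniusLift p φ) (c : ℕ → A) (k : ℕ) :
    ∃ g : ℕ → A, aeval c (wittPolynomial p R k) =
      ∑ i ∈ range (k + 1), (p : A) ^ (k - i) * φ^[i] (g i) := by
  induction k with
  | zero => exact ⟨c, by simp⟩
  | succ k ih =>
    obtain ⟨g, hg⟩ := ih
    obtain ⟨d, hd⟩ := hφ.pow_dvd_map_aeval_wittPolynomial_sub R c k
    refine ⟨fun i => Nat.casesOn i (-d) g, ?_⟩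
    rw [← sub_sub_cancel (φ _) (aeval c _), hd, hg, sum_range_succ' _ (k + 1)]
    simp [Function.iterate_succ_apply', sub_eq_add_neg]

end IsFrobeniusLift

end FrobeniusLift

section Expand

variable {σ R : Type*}

theorem expand_pow_eq_iterate [CommSemiring R] (p k : ℕ) (f : MvPolynomial σ R) :
    expand (p ^ k) f = (expand p)^[k] f := by
  induction k with
  | zero => simp
  | succ k ih => rw [pow_succ', expand_mul, ih, Function.iterate_succ_apply']

theorem isFrobeniusLift_expand {p : ℕ} (hp : p.Prime) :
    IsFrobeniusLift p (expand p : MvPolynomial σ ℤ →ₐ[ℤ] MvPolynomial σ ℤ).toRingHom := by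
  have : Fact p.Prime := ⟨hp⟩
  intro f
  have h : C (p : ℤ) ∣ expand p f - f ^ p := by
    rw [C_dvd_iff_zmod, map_sub, map_expand, expand_zmod, map_pow, sub_self]
  simpa using h

theorem aeval_wittPolynomial_mem_Rset {p : ℕ} (hp : p.Prime) {n : ℕ}
    (c : ℕ → MvPolynomial (Fin n) ℤ) (k : ℕ) :
    aeval c (wittPolynomial p ℤ k) ∈ Rset p n k := by
  obtain ⟨g, hg⟩ := (isFrobeniusLift_expand hp).exists_aeval_wittPolynomial_eq_sum ℤ c k
  refine ⟨g, hg.trans (sum_congr rfl fun i _ => ?_)⟩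
  exact congrArg _ (expand_pow_eq_iterate p i (g i)).symm

theorem isSymmetric_expand [CommSemiring R] (p : ℕ) {f : MvPolynomial σ R} (hf : f.IsSymmetric) :
    (expand p f).IsSymmetric := fun e => by
  rw [rename_expand, hf e]

theorem isSymmetric_of_natCast_mul [CommRing R] [IsDomain R] [CharZero R] {m : ℕ} (hm : m ≠ 0)
    {f : MvPolynomial σ R} (hf : ((m : MvPolynomial σ R) * f).IsSymmetric) : f.IsSymmetric := by
  intro e
  have h := hf e
  rw [map_mul, map_natCast] at h
  exact mul_left_cancel₀ (Nat.cast_ne_zero.2 hm) h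

/-- The substitution `x_i ↦ x_i ^ p` as an endomorphism of the ring of symmetric polynomials. -/
noncomputable def symmetricExpand (σ R : Type*) [CommSemiring R] (p : ℕ) :
    symmetricSubalgebra σ R →+* symmetricSubalgebra σ R :=
  (expand p).toRingHom.restrict _ _ fun _ hf => isSymmetric_expand p hf

theorem coe_symmetricExpand_iterate [CommSemiring R] (p k : ℕ) (f : symmetricSubalgebra σ R) :
    ((symmetricExpand σ R p)^[k] f : MvPolynomial σ R) = expand (p ^ k) (f : MvPolynomial σ R) := by
  rw [expand_pow_eq_iterate]
  exact Function.Semiconj.iterate_right (f := Subtype.val) (fun _ => rfl) k f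

theorem isFrobeniusLift_symmetricExpand {p : ℕ} (hp : p.Prime) :
    IsFrobeniusLift p (symmetricExpand σ ℤ p) :=
  (isFrobeniusLift_expand hp).restrict _ fun _ hf => isSymmetric_of_natCast_mul hp.ne_zero hf

end Expand

section MonomialSymmetric

variable {σ : Type*}

/-- The partition formed by the nonzero exponents of the monomial with exponent vector `d`. -/
def exponentPartition (d : σ →₀ ℕ) : Multiset ℕ :=
  d.support.val.map d

theorem exponentPartition_mapDomain {τ : Type*} (e : σ ≃ τ) (d : σ →₀ ℕ) :
    exponentPartition (d.mapDomain e) = exponentPartition d := by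
  rw [← Finsupp.equivMapDomain_eq_mapDomain]
  simp [exponentPartition, Finsupp.equivMapDomain]

theorem exponentPartition_smul {q : ℕ} (hq : q ≠ 0) (d : σ →₀ ℕ) :
    exponentPartition (q • d) = (exponentPartition d).map (q * ·) := by
  simp [exponentPartition, Finsupp.support_smul_eq hq]

theorem mem_exponentPartition {d : σ →₀ ℕ} {i : σ} (hi : d i ≠ 0) :
    d i ∈ exponentPartition d :=
  Multiset.mem_map_of_mem d (Finsupp.mem_support_iff.2 hi)

theorem apply_le_sum_exponentPartition (d : σ →₀ ℕ) (i : σ) :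
    d i ≤ (exponentPartition d).sum := by
  rcases eq_or_ne (d i) 0 with h0 | h0
  · exact h0 ▸ Nat.zero_le _
  · exact Multiset.le_sum_of_mem (mem_exponentPartition h0)

theorem filter_map_univ_eq_exponentPartition [Fintype σ] (d : σ →₀ ℕ) :
    (univ.val.map d).filter (· ≠ 0) = exponentPartition d := by
  have hsupp : d.support = univ.filter fun i => d i ≠ 0 := by ext; simp
  rw [Multiset.filter_map, exponentPartition, hsupp, filter_val]
  rfl

variable {n : ℕ} {R : Type} [CommSemiring R]

theorem coeff_msymmM (μ : Multiset ℕ) (d : Fin n →₀ ℕ) :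
    coeff d (msymmM n R μ) = if exponentPartition d = μ then 1 else 0 := by
  have hexp (b : Fin n → Fin (μ.sum + 1)) :
      (univ.val.map fun i => (b i : ℕ)).filter (· ≠ 0) =
        exponentPartition (Finsupp.equivFunOnFinite.symm fun i => (b i : ℕ)) :=
    filter_map_univ_eq_exponentPartition (Finsupp.equivFunOnFinite.symm fun i => (b i : ℕ))
  simp only [msymmM, coeff_sum, hexp, apply_ite (coeff d), coeff_monomial, coeff_zero]
  split_ifs with hd
  · have hlt (i : Fin n) : d i < μ.sum + 1 :=
      Nat.lt_succ_of_le (hd ▸ apply_le_sum_exponentPartition d i)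
    have heq : Finsupp.equivFunOnFinite.symm (fun i => d i) = d := by ext; simp
    rw [sum_eq_single_of_mem (fun i => ⟨d i, hlt i⟩) (mem_univ _)]
    · simp [heq, hd]
    · intro b _ hb
      simp only [ite_eq_right_iff]
      rintro - rfl
      exact absurd (funext fun i => Fin.ext (by simp)) hb
  · refine sum_eq_zero fun b _ => ?_
    simp only [ite_eq_right_iff]
    rintro hb rfl
    exact absurd hb hd

theorem msymmM_isSymmetric (μ : Multiset ℕ) : (msymmM n R μ).IsSymmetric := by
  intro e
  ext d
  obtain ⟨c, rfl⟩ := (Finsupp.mapDomain_surjective e.surjective) d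
  rw [coeff_rename_mapDomain _ e.injective, coeff_msymmM, coeff_msymmM,
    exponentPartition_mapDomain]

theorem msymmM_map_mul {q : ℕ} (hq : q ≠ 0) (μ : Multiset ℕ) :
    msymmM n R (μ.map fun i => q * i) = expand q (msymmM n R μ) := by
  ext d
  by_cases hd : ∀ i, q ∣ d i
  · obtain ⟨c, rfl⟩ : ∃ c : Fin n →₀ ℕ, d = q • c := by
      choose c hc using hd
      exact ⟨Finsupp.equivFunOnFinite.symm c, by ext i; simp [hc]⟩
    simp only [coeff_expand_smul _ hq, coeff_msymmM, exponentPartition_smul hq,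
      (Multiset.map_injective (mul_right_injective₀ hq)).eq_iff]
  · obtain ⟨i, hi⟩ := not_forall.1 hd
    rw [coeff_expand_of_not_dvd _ hi, coeff_msymmM, if_neg]
    intro h
    have hmem : d i ∈ μ.map (q * ·) :=
      h ▸ mem_exponentPartition fun h0 => hi (h0 ▸ dvd_zero q)
    obtain ⟨a, -, ha⟩ := Multiset.mem_map.1 hmem
    exact hi ⟨a, ha.symm⟩

end MonomialSymmetric

theorem stmt7_general {p : ℕ} (hp : p.Prime) {n j : ℕ} {ψ F : MvPolynomial (Fin n) ℤ}
    (hF : F.IsSymmetric)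
    (hψ : aeval (fun i : Fin n => esymm (Fin n) ℤ ((i : ℕ) + 1)) ψ = expand (p ^ j) F) :
    ψ ∈ Rset p n j := by
  let e := esymmAlgEquiv (Fin n) ℤ (Fintype.card_fin n)
  obtain ⟨c, hc⟩ :=
    (isFrobeniusLift_symmetricExpand hp).exists_aeval_wittPolynomial_eq_iterate ℤ ⟨F, hF⟩ j
  have heψ : e ψ = aeval c (wittPolynomial p ℤ j) := Subtype.ext <| by
    rw [hc, coe_symmetricExpand_iterate, ← hψ]
    exact esymmAlgHom_apply ψ
  have hψc : ψ = aeval (fun m => e.symm (c m)) (wittPolynomial p ℤ j) := by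
    rw [← e.symm_apply_apply ψ, heψ]
    exact comp_aeval_apply c e.symm.toAlgHom _
  rw [hψc]
  exact aeval_wittPolynomial_mem_Rset hp _ j

theorem stmt7 (p : ℕ) (hp : p.Prime) (n : ℕ) (hn : 1 ≤ n)
    (w : ℕ) (hw : 1 ≤ w) (lam : Multiset ℕ) (hpos : ∀ i ∈ lam, 0 < i)
    (hsum : lam.sum = w) (hcard : Multiset.card lam ≤ n)
    (j : ℕ)
    -- `ψ` is the unique polynomial with `m_{λ^j} = ψ(e_1,…,e_n)`, where
    -- `λ^j = p^j·λ` is obtained by multiplying every part of `λ` by `p^j`.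
    (ψ : MvPolynomial (Fin n) ℤ)
    (hψ : MvPolynomial.aeval (fun i : Fin n => MvPolynomial.esymm (Fin n) ℤ ((i : ℕ) + 1)) ψ =
      msymmM n ℤ (lam.map fun i => p ^ j * i)) :
    ψ ∈ Rset p n j := by
  rw [msymmM_map_mul (pow_ne_zero j hp.ne_zero)] at hψ
  exact stmt7_general hp (msymmM_isSymmetric lam) hψ
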